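/- arXiv:2204.13453 — 2 statements merged into one kernel-verified Lean document; each statement's English description precedes it below -/
import Mathlib

section
/- Let 𝕜 be ℝ or ℂ, let A be a k × d matrix and B a k' × d matrix over 𝕜 with A Aᴴ invertible, let Δ_M = diag(μ₁,…,μ_{k'}) and Δ_N = diag(ν₁,…,ν_k) be diagonal real matrices, and let λ ≥ 0. Then the regularized energy E(C) = ‖C A − B‖_F² + λ ‖C Δ_N − Δ_M C‖_F², defined on k' × k matrices C over 𝕜, has a unique global minimizer. -/
open scoped BigOperators Matrix

/-- The Frobenius norm of a matrix: the square root of the sum of squared absolute values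
of its entries. -/
noncomputable def frobNorm {𝕜 m n : Type*} [RCLike 𝕜] [Fintype m] [Fintype n]
    (A : Matrix m n 𝕜) : ℝ :=
  Real.sqrt (∑ i, ∑ j, ‖A i j‖ ^ 2)

/-- A linear least-squares problem with injective linear map from a finite-dimensional space has
a unique minimizer. -/
theorem existsUnique_leastSquares {𝕜 V F : Type*} [RCLike 𝕜] [AddCommGroup V] [Module 𝕜 V]
    [FiniteDimensional 𝕜 V] [NormedAddCommGroup F] [InnerProductSpace 𝕜 F]
    (L : V →ₗ[𝕜] F) (hL : Function.Injective L) (b : F) :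
    ∃! x₀ : V, ∀ x : V, ‖L x₀ - b‖ ^ 2 ≤ ‖L x - b‖ ^ 2 := by
  obtain ⟨x₀, hx₀⟩ : L.range.starProjection b ∈ L.range := Submodule.starProjection_apply_mem _ _
  have pythagoras (x : V) : ‖L x - b‖ ^ 2 = ‖L x - L x₀‖ ^ 2 + ‖L x₀ - b‖ ^ 2 := by
    have horth : inner 𝕜 (L x - L x₀) (L x₀ - b) = 0 := by
      rw [← neg_sub b, inner_neg_right, neg_eq_zero, hx₀, inner_eq_zero_symm]
      refine Submodule.starProjection_inner_eq_zero _ _ ?_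
      rw [← hx₀, ← map_sub]
      exact LinearMap.mem_range_self L _
    have := norm_add_sq_eq_norm_sq_add_norm_sq_of_inner_eq_zero _ _ horth
    rw [sub_add_sub_cancel] at this
    simpa only [sq] using this
  refine ⟨x₀, fun x => ?_, fun y hy => hL ?_⟩
  · rw [pythagoras x]
    exact le_add_of_nonneg_left (sq_nonneg _)
  · have h := hy x₀
    rw [pythagoras y] at h
    have hsq : ‖L y - L x₀‖ ^ 2 = 0 := le_antisymm (by linarith) (sq_nonneg _)
    exact sub_eq_zero.mp (norm_eq_zero.mp (pow_eq_zero_iff two_ne_zero |>.mp hsq))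

theorem frobNorm_sq {𝕜 m n : Type*} [RCLike 𝕜] [Fintype m] [Fintype n] (A : Matrix m n 𝕜) :
    frobNorm A ^ 2 = ∑ i, ∑ j, ‖A i j‖ ^ 2 :=
  Real.sq_sqrt (by positivity)

/-- The linear map `C ↦ (C A, c (C D - D' C))`, with the two matrices stacked as a vector. -/
noncomputable def stackedMap {𝕜 m n p : Type*} [RCLike 𝕜] [Fintype m] [Fintype n] [Fintype p]
    (A : Matrix n p 𝕜) (D : Matrix n n 𝕜) (D' : Matrix m m 𝕜) (c : 𝕜) :
    Matrix m n 𝕜 →ₗ[𝕜] EuclideanSpace 𝕜 ((m × p) ⊕ (m × n)) where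
  toFun C := WithLp.toLp 2
    (Sum.elim (fun q => (C * A) q.1 q.2) (fun q => c * (C * D - D' * C) q.1 q.2))
  map_add' C C' := by
    ext (q | q)
    · simp [Matrix.add_mul]
    · simp only [Matrix.add_mul, Matrix.mul_add, PiLp.add_apply, Sum.elim_inr, Matrix.sub_apply,
        Matrix.add_apply]
      ring
  map_smul' a C := by
    ext (q | q)
    · simp
    · simp only [Matrix.smul_mul, Matrix.mul_smul, PiLp.smul_apply, Sum.elim_inr,
        Matrix.sub_apply, Matrix.smul_apply, smul_eq_mul, RingHom.id_apply]
      ring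

theorem stackedMap_injective {𝕜 m n p : Type*} [RCLike 𝕜] [Fintype m] [Fintype n]
    [DecidableEq n] [Fintype p] (A : Matrix n p 𝕜) (hA : IsUnit (A * Aᴴ)) (D : Matrix n n 𝕜)
    (D' : Matrix m m 𝕜) (c : 𝕜) : Function.Injective (stackedMap A D D' c) := by
  rw [injective_iff_map_eq_zero]
  intro C hC
  have hCA : C * A = 0 := by
    ext i j
    simpa [stackedMap] using congrArg (fun v => v (Sum.inl (i, j))) hC
  obtain ⟨R, hR⟩ := hA.exists_right_inv
  calc C = C * (A * Aᴴ * R) := by rw [hR, Matrix.mul_one]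
    _ = C * A * (Aᴴ * R) := by simp only [Matrix.mul_assoc]
    _ = 0 := by rw [hCA, Matrix.zero_mul]

theorem norm_stackedMap_sub_sq {𝕜 m n p : Type*} [RCLike 𝕜] [Fintype m] [Fintype n] [Fintype p]
    (A : Matrix n p 𝕜) (B : Matrix m p 𝕜) (D : Matrix n n 𝕜) (D' : Matrix m m 𝕜) (c : 𝕜)
    (C : Matrix m n 𝕜) :
    ‖stackedMap A D D' c C - WithLp.toLp 2 (Sum.elim (fun q => B q.1 q.2) 0)‖ ^ 2 =
      frobNorm (C * A - B) ^ 2 + ‖c‖ ^ 2 * frobNorm (C * D - D' * C) ^ 2 := by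
  simp [EuclideanSpace.norm_sq_eq, frobNorm_sq, stackedMap, Fintype.sum_prod_type, mul_pow,
    Finset.mul_sum]

/-- For `𝕜 = ℝ` or `ℂ`, `A` a `k × d` and `B` a `k' × d` matrix over `𝕜`
with `A Aᴴ` invertible, real diagonal matrices `Δ_M = diag(μ)`, `Δ_N = diag(ν)` and
`λ ≥ 0`, the regularized energy `E(C) = ‖C A − B‖_F² + λ ‖C Δ_N − Δ_M C‖_F²` on `k' × k`
matrices has a unique global minimizer. -/
theorem regularized_fmap_unique_minimizer {𝕜 : Type*} [RCLike 𝕜] {k k' d : ℕ}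
    (A : Matrix (Fin k) (Fin d) 𝕜) (B : Matrix (Fin k') (Fin d) 𝕜)
    (hA : IsUnit (A * Aᴴ)) (μ : Fin k' → ℝ) (ν : Fin k → ℝ)
    (lam : ℝ) (hlam : 0 ≤ lam) :
    ∃! C₀ : Matrix (Fin k') (Fin k) 𝕜,
      ∀ C : Matrix (Fin k') (Fin k) 𝕜,
        frobNorm (C₀ * A - B) ^ 2 +
            lam * frobNorm (C₀ * Matrix.diagonal (fun j => (ν j : 𝕜)) -
              Matrix.diagonal (fun i => (μ i : 𝕜)) * C₀) ^ 2 ≤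
          frobNorm (C * A - B) ^ 2 +
            lam * frobNorm (C * Matrix.diagonal (fun j => (ν j : 𝕜)) -
              Matrix.diagonal (fun i => (μ i : 𝕜)) * C) ^ 2 := by
  have hc : ‖((Real.sqrt lam : ℝ) : 𝕜)‖ ^ 2 = lam := by
    rw [RCLike.norm_ofReal, sq_abs, Real.sq_sqrt hlam]
  have h := existsUnique_leastSquares _
    (stackedMap_injective A hA (Matrix.diagonal fun j => (ν j : 𝕜))
      (Matrix.diagonal fun i => (μ i : 𝕜)) ((Real.sqrt lam : ℝ) : 𝕜))
    (WithLp.toLp 2 (Sum.elim (fun q => B q.1 q.2) 0))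
  simpa only [norm_stackedMap_sub_sq, hc] using h
end

section
/- Let E and F be real inner product spaces that are complete (Hilbert spaces), let φ : E → F be differentiable at p ∈ E, and let A : E → F be a continuous linear map such that for every f : F → ℝ differentiable at φ(p) and every X ∈ E, ⟪X, ∇(f ∘ φ)(p)⟫_E = ⟪A(X), ∇f(φ(p))⟫_F. Then A equals the Fréchet derivative Dφ_p of φ at p. -/
open scoped RealInnerProductSpace

/-- Rigidity of the pushforward: if `φ : E → F` is differentiable at `p`
and a continuous linear map `A : E → F` satisfies
`⟪X, ∇(f ∘ φ)(p)⟫ = ⟪A X, ∇f(φ p)⟫` for every `f : F → ℝ` differentiable at `φ p` and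
every `X ∈ E`, then `A` is the Fréchet derivative of `φ` at `p`. -/
theorem pushforward_unique {E F : Type*}
    [NormedAddCommGroup E] [InnerProductSpace ℝ E] [CompleteSpace E]
    [NormedAddCommGroup F] [InnerProductSpace ℝ F] [CompleteSpace F]
    (φ : E → F) (p : E) (hφ : DifferentiableAt ℝ φ p) (A : E →L[ℝ] F)
    (hA : ∀ f : F → ℝ, DifferentiableAt ℝ f (φ p) →
      ∀ X : E, ⟪X, gradient (f ∘ φ) p⟫ = ⟪A X, gradient f (φ p)⟫) :
    A = fderiv ℝ φ p := by
  ext X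
  refine ext_inner_left ℝ fun w => ?_
  have h := hA (innerSL ℝ w) (innerSL ℝ w).differentiableAt X
  rw [inner_gradient_right, inner_gradient_right, fderiv_comp p (innerSL ℝ w).differentiableAt hφ,
    ContinuousLinearMap.fderiv] at h
  simpa using h.symm
end
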